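/- Let M be an admissible weight sequence, Ω ⊆ ℝ^n a bounded open set, and E a Banach space together with an injective continuous linear map ι : E → L²(Ω). Suppose there is an open set U₀ ⊆ Ω such that for every u ∈ E the function ι(u) agrees almost everywhere on U₀ with a function ũ belonging to the Denjoy–Carleman class E^{M}(U₀). Then for all open sets V ⋐ U ⋐ U₀ and every Ehrenpreis–Hörmander cut-off sequence (χ_k)_{k≥1} supported in U and centered in V, there exist constants C, γ > 0 such that for all k ≥ 1 and all u ∈ E: the function ξ ↦ |ξ|^k F(χ_k ũ)(ξ) lies in L²(ℝ^n), where χ_k ũ is extended by 0 outside U, and ‖ |ξ|^k F(χ_k ũ) ‖_{L²(ℝ^n)} ≤ C γ^k M_k ‖u‖_E. -/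

import Mathlib

/-!
For a single `v` of class `E^{M}(U₀)`, Leibniz' rule in each coordinate direction together with
`k ^ j ≤ e ^ k * j!`, `j! ≤ A * h ^ j * M_j` and `M_j * M_{k-j} ≤ M_k` bounds the pure derivatives
`∂_i^k (χ_k v)` by `C * γ ^ k * M_k`, and Plancherel turns this into the asserted `L²` bound with
`C` and `γ` depending on `v`. For uniformity, let `A_N ⊆ E` be the set of those `u` for which the
bound `(N + 1) ^ (k + 1) * M_k` holds for all `k`. For fixed `ξ` and `k` the map `u ↦ 𝓕(χ_k ũ)(ξ)`
is continuous on `E`, being the pairing of `ι u` with a fixed `L²` function, so by Fatou's lemma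
each `A_N` is closed. The `A_N` cover `E`, hence by Baire's theorem one of them contains a ball,
and linearity of `u ↦ 𝓕(χ_k ũ)` spreads its bound over `E` with a factor proportional to `‖u‖`.
-/

open MeasureTheory Filter Finset

noncomputable section

/-- `M` is a weight sequence: positivity, `M₀ = 1`, `M₁ ≥ 1`, log-convexity, and
`M_k^{1/k} → ∞`. -/
def IsWeightSeq (M : ℕ → ℝ) : Prop :=
  (∀ k, 0 < M k) ∧ M 0 = 1 ∧ 1 ≤ M 1 ∧
    (∀ k : ℕ, (M (k + 1)) ^ 2 ≤ M k * M (k + 2)) ∧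
    Tendsto (fun k : ℕ => (M k) ^ ((k : ℝ)⁻¹)) atTop atTop

/-- `Λ_k = M_k^{1/k}`. -/
def Lam (M : ℕ → ℝ) (k : ℕ) : ℝ := (M k) ^ ((k : ℝ)⁻¹)

/-- Condition (i): there are `C, h > 0` with `k! ≤ C h^k M_k` for all `k`. -/
def FactBound (M : ℕ → ℝ) : Prop :=
  ∃ C > 0, ∃ h > 0, ∀ k : ℕ, (k.factorial : ℝ) ≤ C * h ^ k * M k

/-- Condition (mg): there is `A > 0` with `M_{j+k} ≤ A^{j+k} M_j M_k` for all `j, k`. -/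
def MG (M : ℕ → ℝ) : Prop := ∃ A > 0, ∀ j k : ℕ, M (j + k) ≤ A ^ (j + k) * M j * M k

/-- Admissible weight sequence. -/
def IsAdmissible (M : ℕ → ℝ) : Prop := IsWeightSeq M ∧ FactBound M ∧ MG M

/-- Euclidean `n`-space. -/
abbrev Esp (n : ℕ) := EuclideanSpace ℝ (Fin n)

/-- The length `|α|` of a multi-index. -/
def degree {n : ℕ} (α : Fin n → ℕ) : ℕ := ∑ i, α i

/-- The finite set of all multi-indices `α` with `|α| ≤ k`. -/
def midx (n k : ℕ) : Finset (Fin n → ℕ) :=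
  (Fintype.piFinset fun _ : Fin n => Finset.range (k + 1)).filter fun α => degree α ≤ k

/-- The monomial `ξ^α`. -/
def mon {n : ℕ} (α : Fin n → ℕ) (ξ : Esp n) : ℝ := ∏ i, ξ i ^ α i

/-- The `L²(ℝ^n)` norm of a complex-valued function. -/
def L2C {n : ℕ} (g : Esp n → ℂ) : ℝ := (∫ ξ : Esp n, ‖g ξ‖ ^ 2) ^ ((1 : ℝ) / 2)

/-- Partial derivative in the `i`-th coordinate direction. -/
def pd {n : ℕ} (i : Fin n) (f : Esp n → ℝ) : Esp n → ℝ :=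
  fun x => fderiv ℝ f x (EuclideanSpace.single i 1)

/-- The multi-index derivative `∂^α f`. -/
def mderiv {n : ℕ} (α : Fin n → ℕ) (f : Esp n → ℝ) : Esp n → ℝ :=
  ((List.finRange n).flatMap fun i => List.replicate (α i) i).foldr pd f

/-- The Denjoy–Carleman class `E^{M}(Ω)`: smooth functions on `Ω` such that on every compact
`K ⊆ Ω` the derivatives satisfy `|∂^α f| ≤ C h^{|α|} M_{|α|}`. -/
def DCclass {n : ℕ} (M : ℕ → ℝ) (Ω : Set (Esp n)) : Set (Esp n → ℝ) :=
  {f | ContDiffOn ℝ (⊤ : ℕ∞) f Ω ∧ ∀ K : Set (Esp n), K ⊆ Ω → IsCompact K →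
    ∃ C > 0, ∃ h > 0, ∀ (α : Fin n → ℕ), ∀ x ∈ K,
      |mderiv α f x| ≤ C * h ^ degree α * M (degree α)}

/-- Ehrenpreis–Hörmander cut-off sequence supported in `U`, centered in `V`,
with constant `Q`. -/
def EHCutoff {n : ℕ} (χ : ℕ → Esp n → ℝ) (U V : Set (Esp n)) (Q : ℝ) : Prop :=
  ∀ k : ℕ, 1 ≤ k → ContDiff ℝ (⊤ : ℕ∞) (χ k) ∧ HasCompactSupport (χ k) ∧
    tsupport (χ k) ⊆ U ∧ (∀ x ∈ V, χ k x = 1) ∧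
    ∀ α : Fin n → ℕ, degree α ≤ k → ∀ x,
      |mderiv α (χ k) x| ≤ Q ^ degree α * (k : ℝ) ^ degree α

section DirectionalDerivatives

open scoped ContDiff

variable {V F : Type*} [NormedAddCommGroup V] [NormedSpace ℝ V] [NormedAddCommGroup F]
  [NormedSpace ℝ F]

lemma fderiv_iteratedFDeriv_apply_const {f : V → F} {x : V} {k : ℕ}
    (hf : ContDiffAt ℝ (k + 1) f x) (e : V) :
    fderiv ℝ (fun y ↦ iteratedFDeriv ℝ k f y fun _ ↦ e) x e =
      iteratedFDeriv ℝ (k + 1) f x fun _ ↦ e := by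
  have hdiff : DifferentiableAt ℝ (iteratedFDeriv ℝ k f) x :=
    hf.differentiableAt_iteratedFDeriv (by exact_mod_cast k.lt_succ_self)
  rw [fderiv_continuousMultilinear_apply_const_apply hdiff, iteratedFDeriv_succ_apply_left]
  rfl

lemma iteratedDeriv_comp_line {S : Set V} (hS : IsOpen S) {f : V → F} (hf : ContDiffOn ℝ ∞ f S)
    (x e : V) (k : ℕ) {t : ℝ} (ht : x + t • e ∈ S) :
    iteratedDeriv k (fun s : ℝ ↦ f (x + s • e)) t =
      iteratedFDeriv ℝ k f (x + t • e) fun _ ↦ e := by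
  induction k generalizing t with
  | zero => simp
  | succ k ih =>
    have hline : HasDerivAt (fun s : ℝ ↦ x + s • e) e t := by
      simpa using ((hasDerivAt_id t).smul_const e).const_add x
    have hnear : (iteratedDeriv k fun s : ℝ ↦ f (x + s • e)) =ᶠ[nhds t]
        fun s ↦ iteratedFDeriv ℝ k f (x + s • e) fun _ ↦ e := by
      filter_upwards [hline.continuousAt.preimage_mem_nhds (hS.mem_nhds ht)] with s hs using ih hs
    have hfx : ContDiffAt ℝ (k + 1) f (x + t • e) :=
      (hf.contDiffAt (hS.mem_nhds ht)).of_le (by exact_mod_cast le_top)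
    have hdiff : DifferentiableAt ℝ (fun y ↦ iteratedFDeriv ℝ k f y fun _ ↦ e) (x + t • e) :=
      (hfx.differentiableAt_iteratedFDeriv (by exact_mod_cast k.lt_succ_self))
        |>.continuousMultilinear_apply_const _
    rw [iteratedDeriv_succ, hnear.deriv_eq, ← fderiv_iteratedFDeriv_apply_const hfx]
    exact (hdiff.hasFDerivAt.comp_hasDerivAt t hline).deriv

lemma iteratedFDeriv_mul_apply_const {S : Set V} (hS : IsOpen S) {f g : V → ℝ}
    (hf : ContDiffOn ℝ ∞ f S) (hg : ContDiffOn ℝ ∞ g S) {x : V} (hx : x ∈ S) (e : V) (k : ℕ) :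
    iteratedFDeriv ℝ k (fun y ↦ f y * g y) x (fun _ ↦ e) =
      ∑ j ∈ range (k + 1), (k.choose j : ℝ) * iteratedFDeriv ℝ j f x (fun _ ↦ e) *
        iteratedFDeriv ℝ (k - j) g x fun _ ↦ e := by
  have hx₀ : x + (0 : ℝ) • e ∈ S := by simpa using hx
  have hsmooth {φ : V → ℝ} (hφ : ContDiffOn ℝ ∞ φ S) :
      ContDiffAt ℝ k (fun s : ℝ ↦ φ (x + s • e)) 0 :=
    ((hφ.contDiffAt (hS.mem_nhds hx₀)).of_le (by exact_mod_cast le_top)).comp (0 : ℝ)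
      (by fun_prop)
  have hderiv {φ : V → ℝ} (hφ : ContDiffOn ℝ ∞ φ S) (j : ℕ) :
      iteratedFDeriv ℝ j φ x (fun _ ↦ e) = iteratedDeriv j (fun s : ℝ ↦ φ (x + s • e)) 0 := by
    simpa using (iteratedDeriv_comp_line hS hφ x e j hx₀).symm
  simp only [hderiv (hf.mul hg), hderiv hf, hderiv hg]
  exact iteratedDeriv_fun_mul (hsmooth hf) (hsmooth hg)

end DirectionalDerivatives

section MultiIndex

open scoped ContDiff

variable {n : ℕ}

lemma degree_single (i : Fin n) (k : ℕ) : degree (Pi.single i k) = k := by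
  simp [degree]

lemma flatMap_replicate_single (i : Fin n) (k : ℕ) :
    ((List.finRange n).flatMap fun j ↦ List.replicate ((Pi.single i k : Fin n → ℕ) j) j) =
      List.replicate k i := by
  refine List.eq_replicate_iff.2 ⟨?_, fun j hj ↦ ?_⟩
  · simp [List.length_flatMap, ← List.ofFn_eq_map, List.sum_ofFn]
  · obtain ⟨_, -, hmem⟩ := List.mem_flatMap.1 hj
    obtain ⟨hne, rfl⟩ := List.mem_replicate.1 hmem
    by_contra hji
    exact hne (Pi.single_eq_of_ne hji _)

lemma mderiv_single {S : Set (Esp n)} (hS : IsOpen S) {f : Esp n → ℝ} (hf : ContDiffOn ℝ ∞ f S)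
    (i : Fin n) (k : ℕ) {x : Esp n} (hx : x ∈ S) :
    mderiv (Pi.single i k) f x =
      iteratedFDeriv ℝ k f x fun _ ↦ EuclideanSpace.single i 1 := by
  rw [mderiv, flatMap_replicate_single]
  induction k generalizing x with
  | zero => simp
  | succ k ih =>
    have hnear : (List.replicate k i).foldr pd f =ᶠ[nhds x]
        fun y ↦ iteratedFDeriv ℝ k f y fun _ ↦ EuclideanSpace.single i 1 := by
      filter_upwards [hS.mem_nhds hx] with y hy using ih hy
    rw [List.replicate_succ, List.foldr_cons, pd, hnear.fderiv_eq]
    exact fderiv_iteratedFDeriv_apply_const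
      ((hf.contDiffAt (hS.mem_nhds hx)).of_le (by exact_mod_cast le_top)) _

end MultiIndex

section WeightSequences

open scoped ContDiff Nat

lemma mul_le_mul_of_log_convex {M : ℕ → ℝ} (hpos : ∀ k, 0 < M k)
    (hconv : ∀ k, M (k + 1) ^ 2 ≤ M k * M (k + 2)) (j l : ℕ) :
    M j * M l ≤ M 0 * M (j + l) := by
  have hratio : Monotone fun k ↦ M (k + 1) / M k := monotone_nat_of_le_succ fun k ↦ by
    rw [div_le_div_iff₀ (hpos k) (hpos (k + 1)), ← sq, mul_comm]
    exact hconv k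
  induction j with
  | zero => simp
  | succ j ih =>
    calc M (j + 1) * M l = M (j + 1) / M j * (M j * M l) := by
          field_simp [(hpos j).ne']
      _ ≤ M (j + l + 1) / M (j + l) * (M 0 * M (j + l)) :=
          mul_le_mul (hratio (Nat.le_add_right j l)) ih (mul_pos (hpos _) (hpos _)).le
            (div_pos (hpos _) (hpos _)).le
      _ = M 0 * M (j + 1 + l) := by
          rw [add_right_comm j 1 l]
          field_simp [(hpos (j + l)).ne']

lemma IsWeightSeq.mul_le {M : ℕ → ℝ} (hM : IsWeightSeq M) (j l : ℕ) :
    M j * M l ≤ M (j + l) := by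
  obtain ⟨hpos, hzero, -, hconv, -⟩ := hM
  simpa [hzero] using mul_le_mul_of_log_convex hpos hconv j l

lemma natCast_pow_le_exp_pow_mul_factorial (k j : ℕ) :
    (k : ℝ) ^ j ≤ Real.exp 1 ^ k * j ! := by
  rw [← Real.exp_nat_mul, mul_one, ← div_le_iff₀ (by positivity)]
  exact Real.pow_div_factorial_le_exp _ k.cast_nonneg j

lemma IsWeightSeq.natCast_pow_mul_le {M : ℕ → ℝ} (hM : IsWeightSeq M) {A h : ℝ} (hA : 0 ≤ A)
    (hh : 0 ≤ h) (hfac : ∀ j : ℕ, (j ! : ℝ) ≤ A * h ^ j * M j) {j k : ℕ} (hjk : j ≤ k) :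
    (k : ℝ) ^ j * M (k - j) ≤ A * Real.exp 1 ^ k * h ^ j * M k := by
  have hMkj : 0 ≤ M (k - j) := (hM.1 _).le
  calc (k : ℝ) ^ j * M (k - j) ≤ Real.exp 1 ^ k * (A * h ^ j * M j) * M (k - j) := by
        gcongr
        exact (natCast_pow_le_exp_pow_mul_factorial k j).trans (by gcongr; exact hfac j)
    _ = A * Real.exp 1 ^ k * h ^ j * (M j * M (k - j)) := by ring
    _ ≤ A * Real.exp 1 ^ k * h ^ j * M k := by
        gcongr
        simpa [hjk] using hM.mul_le j (k - j)

lemma abs_iteratedFDeriv_mul_le {V : Type*} [NormedAddCommGroup V] [NormedSpace ℝ V]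
    {M : ℕ → ℝ} (hM : IsWeightSeq M) {A h : ℝ} (hA : 0 ≤ A) (hh : 0 ≤ h)
    (hfac : ∀ j : ℕ, (j ! : ℝ) ≤ A * h ^ j * M j) {S : Set V} (hS : IsOpen S)
    {f g : V → ℝ} (hf : ContDiffOn ℝ ∞ f S) (hg : ContDiffOn ℝ ∞ g S) {x : V} (hx : x ∈ S)
    (e : V) {k : ℕ} {Q B q : ℝ} (hQ : 0 ≤ Q) (hB : 0 ≤ B) (hq : 0 ≤ q)
    (hfb : ∀ j ≤ k, |iteratedFDeriv ℝ j f x fun _ ↦ e| ≤ Q ^ j * (k : ℝ) ^ j)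
    (hgb : ∀ j ≤ k, |iteratedFDeriv ℝ j g x fun _ ↦ e| ≤ B * q ^ j * M j) :
    |iteratedFDeriv ℝ k (fun y ↦ f y * g y) x fun _ ↦ e| ≤
      A * B * (Real.exp 1 * (Q * h + q)) ^ k * M k := by
  rw [iteratedFDeriv_mul_apply_const hS hf hg hx e k]
  calc |∑ j ∈ range (k + 1), (k.choose j : ℝ) * iteratedFDeriv ℝ j f x (fun _ ↦ e) *
        iteratedFDeriv ℝ (k - j) g x fun _ ↦ e|
      ≤ ∑ j ∈ range (k + 1), (k.choose j : ℝ) * (Q ^ j * (k : ℝ) ^ j) *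
          (B * q ^ (k - j) * M (k - j)) := by
        refine (abs_sum_le_sum_abs _ _).trans (sum_le_sum fun j hj ↦ ?_)
        rw [abs_mul, abs_mul, Nat.abs_cast]
        gcongr
        exacts [hfb j (mem_range_succ_iff.1 hj), hgb (k - j) (Nat.sub_le k j)]
    _ = ∑ j ∈ range (k + 1), B * (Q ^ j * q ^ (k - j) * k.choose j) *
          ((k : ℝ) ^ j * M (k - j)) := sum_congr rfl fun j _ ↦ by ring
    _ ≤ ∑ j ∈ range (k + 1), B * (Q ^ j * q ^ (k - j) * k.choose j) *
          (A * Real.exp 1 ^ k * h ^ j * M k) := by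
        refine sum_le_sum fun j hj ↦ mul_le_mul_of_nonneg_left ?_ (by positivity)
        exact hM.natCast_pow_mul_le hA hh hfac (mem_range_succ_iff.1 hj)
    _ = A * B * Real.exp 1 ^ k * M k *
          ∑ j ∈ range (k + 1), (Q * h) ^ j * q ^ (k - j) * k.choose j := by
        rw [mul_sum]
        exact sum_congr rfl fun j _ ↦ by rw [mul_pow]; ring
    _ = A * B * (Real.exp 1 * (Q * h + q)) ^ k * M k := by
        rw [← add_pow, mul_pow]
        ring

end WeightSequences

section Fourier

open scoped SchwartzMap LineDeriv FourierTransform RealInnerProductSpace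

lemma norm_pow_le_card_pow_mul_sum_inner_pow {V ι : Type*} [NormedAddCommGroup V]
    [InnerProductSpace ℝ V] [Fintype ι] (b : OrthonormalBasis ι ℝ V) (ξ : V) {k : ℕ} (hk : k ≠ 0) :
    ‖ξ‖ ^ (2 * k) ≤ (Fintype.card ι : ℝ) ^ (k - 1) * ∑ i, ⟪ξ, b i⟫ ^ (2 * k) := by
  obtain ⟨m, rfl⟩ := Nat.exists_eq_add_one_of_ne_zero hk
  simpa [pow_mul, ← b.sum_sq_norm_inner_left ξ] using
    pow_sum_le_card_mul_sum_pow (s := univ) (f := fun i ↦ ⟪ξ, b i⟫ ^ 2)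
      (fun i _ ↦ sq_nonneg _) m

variable {V : Type*} [NormedAddCommGroup V] [InnerProductSpace ℝ V] [FiniteDimensional ℝ V]
  [MeasurableSpace V] [BorelSpace V] {ι : Type*} [Fintype ι]

lemma fourier_iteratedLineDerivOp_const_apply (f : 𝓢(V, ℂ)) (e ξ : V) (k : ℕ) :
    𝓕 (∂^{fun _ : Fin k ↦ e} f) ξ = (2 * Real.pi * Complex.I * ⟪ξ, e⟫) ^ k * 𝓕 f ξ := by
  have htemp : (fun x : V ↦ ⟪x, e⟫).HasTemperateGrowth := by fun_prop
  induction k with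
  | zero => simp
  | succ k ih =>
    have hsucc : ∂^{fun _ : Fin (k + 1) ↦ e} f = ∂_{e} (∂^{fun _ : Fin k ↦ e} f) :=
      LineDeriv.iteratedLineDerivOp_succ_left _ f
    rw [hsucc, SchwartzMap.fourier_lineDerivOp_eq, smul_apply,
      SchwartzMap.smulLeftCLM_apply_apply htemp, ih, Complex.real_smul, smul_eq_mul]
    ring

lemma inner_pow_mul_norm_fourier_sq_le (f : 𝓢(V, ℂ)) (e ξ : V) (k : ℕ) :
    ⟪ξ, e⟫ ^ (2 * k) * ‖𝓕 f ξ‖ ^ 2 ≤ ‖𝓕 (∂^{fun _ : Fin k ↦ e} f) ξ‖ ^ 2 := by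
  have hpi : (1 : ℝ) ≤ (2 * Real.pi) ^ (2 * k) :=
    one_le_pow₀ (by linarith [Real.pi_gt_three])
  calc ⟪ξ, e⟫ ^ (2 * k) * ‖𝓕 f ξ‖ ^ 2
      ≤ (2 * Real.pi) ^ (2 * k) * (⟪ξ, e⟫ ^ (2 * k) * ‖𝓕 f ξ‖ ^ 2) :=
        le_mul_of_one_le_left (mul_nonneg ((even_two_mul k).pow_nonneg _) (sq_nonneg _)) hpi
    _ = ‖𝓕 (∂^{fun _ : Fin k ↦ e} f) ξ‖ ^ 2 := by
        rw [fourier_iteratedLineDerivOp_const_apply]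
        simp only [norm_mul, norm_pow, Complex.norm_I, Complex.norm_real, Complex.norm_ofNat,
          Real.norm_eq_abs, abs_of_pos Real.pi_pos, mul_pow, ← pow_mul, mul_comm k 2]
        rw [(even_two_mul k).pow_abs]
        ring

lemma norm_pow_mul_norm_fourier_sq_le (b : OrthonormalBasis ι ℝ V) (f : 𝓢(V, ℂ)) (ξ : V) {k : ℕ}
    (hk : k ≠ 0) :
    ‖ξ‖ ^ (2 * k) * ‖𝓕 f ξ‖ ^ 2 ≤
      (Fintype.card ι : ℝ) ^ (k - 1) * ∑ i, ‖𝓕 (∂^{fun _ : Fin k ↦ b i} f) ξ‖ ^ 2 := by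
  calc ‖ξ‖ ^ (2 * k) * ‖𝓕 f ξ‖ ^ 2
      ≤ (Fintype.card ι : ℝ) ^ (k - 1) * (∑ i, ⟪ξ, b i⟫ ^ (2 * k)) * ‖𝓕 f ξ‖ ^ 2 := by
        gcongr
        exact norm_pow_le_card_pow_mul_sum_inner_pow b ξ hk
    _ = (Fintype.card ι : ℝ) ^ (k - 1) * ∑ i, ⟪ξ, b i⟫ ^ (2 * k) * ‖𝓕 f ξ‖ ^ 2 := by
        rw [mul_assoc, sum_mul]
    _ ≤ _ := by
        gcongr with i
        exact inner_pow_mul_norm_fourier_sq_le f (b i) ξ k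

lemma integrable_norm_pow_mul_norm_schwartzMap_sq {F : Type*} [NormedAddCommGroup F]
    [NormedSpace ℝ F] (f : 𝓢(V, F)) (k : ℕ) :
    Integrable fun x ↦ ‖x‖ ^ k * ‖f x‖ ^ 2 := by
  refine ((f.integrable_pow_mul volume k).mul_bdd (c := SchwartzMap.seminorm ℝ 0 0 f)
    f.continuous.norm.aestronglyMeasurable (ae_of_all _ fun x ↦ ?_)).congr
    (ae_of_all _ fun x ↦ ?_)
  · simpa using f.norm_le_seminorm ℝ x
  · ring

lemma integral_norm_pow_mul_norm_fourier_sq_le (b : OrthonormalBasis ι ℝ V) (f : 𝓢(V, ℂ))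
    {k : ℕ} (hk : k ≠ 0) :
    ∫ ξ, ‖ξ‖ ^ (2 * k) * ‖𝓕 f ξ‖ ^ 2 ≤
      (Fintype.card ι : ℝ) ^ (k - 1) * ∑ i, ∫ x, ‖(∂^{fun _ : Fin k ↦ b i} f) x‖ ^ 2 := by
  have hint (i : ι) : Integrable fun ξ ↦ ‖𝓕 (∂^{fun _ : Fin k ↦ b i} f) ξ‖ ^ 2 :=
    (SchwartzMap.memLp _ 2 volume).integrable_norm_pow two_ne_zero
  calc ∫ ξ, ‖ξ‖ ^ (2 * k) * ‖𝓕 f ξ‖ ^ 2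
      ≤ ∫ ξ, (Fintype.card ι : ℝ) ^ (k - 1) * ∑ i, ‖𝓕 (∂^{fun _ : Fin k ↦ b i} f) ξ‖ ^ 2 :=
        integral_mono (integrable_norm_pow_mul_norm_schwartzMap_sq _ _)
          ((integrable_finsetSum _ fun i _ ↦ hint i).const_mul _)
          fun ξ ↦ norm_pow_mul_norm_fourier_sq_le b f ξ hk
    _ = (Fintype.card ι : ℝ) ^ (k - 1) * ∑ i, ∫ x, ‖(∂^{fun _ : Fin k ↦ b i} f) x‖ ^ 2 := by
        rw [integral_const_mul, integral_finsetSum _ fun i _ ↦ hint i]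
        simp only [SchwartzMap.integral_norm_sq_fourier]

end Fourier
section SingleFunction

open scoped ContDiff FourierTransform SchwartzMap LineDeriv

lemma contDiff_mul_of_tsupport_subset {V : Type*} [NormedAddCommGroup V] [NormedSpace ℝ V]
    {S : Set V} (hS : IsOpen S) {f g : V → ℝ} (hf : ContDiff ℝ ∞ f) (hfS : tsupport f ⊆ S)
    (hg : ContDiffOn ℝ ∞ g S) : ContDiff ℝ ∞ fun x ↦ f x * g x := by
  refine contDiff_iff_contDiffAt.2 fun x ↦ ?_
  by_cases hx : x ∈ S
  · exact hf.contDiffAt.mul (hg.contDiffAt (hS.mem_nhds hx))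
  · have hzero : (fun y ↦ f y * g y) =ᶠ[nhds x] fun _ ↦ 0 := by
      filter_upwards [(isClosed_tsupport f).isOpen_compl.mem_nhds fun h ↦ hx (hfS h)] with y hy
      rw [image_eq_zero_of_notMem_tsupport hy, zero_mul]
    exact contDiffAt_const.congr_of_eventuallyEq hzero

lemma exists_schwartzMap_eq_mul {V : Type*} [NormedAddCommGroup V] [NormedSpace ℝ V]
    {S : Set V} (hS : IsOpen S) {f g : V → ℝ} (hf : ContDiff ℝ ∞ f) (hfc : HasCompactSupport f)
    (hfS : tsupport f ⊆ S) (hg : ContDiffOn ℝ ∞ g S) :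
    ∃ F : 𝓢(V, ℂ), ⇑F = fun x ↦ ((f x * g x : ℝ) : ℂ) := by
  have hc : HasCompactSupport fun x ↦ ((f x * g x : ℝ) : ℂ) :=
    (hfc.mul_right (f' := g)).comp_left Complex.ofReal_zero
  exact ⟨hc.toSchwartzMap (Complex.ofRealCLM.contDiff.comp
    (contDiff_mul_of_tsupport_subset hS hf hfS hg)), rfl⟩

lemma norm_iteratedFDeriv_ofReal_apply {V : Type*} [NormedAddCommGroup V] [NormedSpace ℝ V]
    {f : V → ℝ} (hf : ContDiff ℝ ∞ f) (k : ℕ) (x : V) (m : Fin k → V) :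
    ‖iteratedFDeriv ℝ k (fun y ↦ (f y : ℂ)) x m‖ = |iteratedFDeriv ℝ k f x m| := by
  have hcomp := Complex.ofRealCLM.iteratedFDeriv_comp_left hf.contDiffAt (x := x) (i := k)
    (by exact_mod_cast le_top)
  change ‖iteratedFDeriv ℝ k (Complex.ofRealCLM ∘ f) x m‖ = _
  simp [hcomp]

lemma integral_norm_sq_le_of_support_subset {α F : Type*} [MeasurableSpace α]
    [NormedAddCommGroup F] {μ : Measure α} {f : α → F} {K : Set α} (hK : μ K ≠ ⊤)
    (hf : Function.support f ⊆ K) {B : ℝ} (hB : ∀ x ∈ K, ‖f x‖ ≤ B) :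
    ∫ x, ‖f x‖ ^ 2 ∂μ ≤ μ.real K * B ^ 2 := by
  have hzero (x : α) (hx : x ∉ K) : ‖f x‖ ^ 2 = 0 := by
    simp [Function.notMem_support.1 fun hfx ↦ hx (hf hfx)]
  rw [← setIntegral_eq_integral_of_forall_compl_eq_zero hzero, mul_comm]
  refine (Real.le_norm_self _).trans (norm_setIntegral_le_of_norm_le_const hK.lt_top fun x hx ↦ ?_)
  rw [norm_pow, norm_norm]
  gcongr
  exact hB x hx

lemma integral_norm_pow_mul_norm_fourier_sq_le_card_pow {V ι : Type*} [NormedAddCommGroup V]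
    [InnerProductSpace ℝ V] [FiniteDimensional ℝ V] [MeasurableSpace V] [BorelSpace V] [Fintype ι]
    (b : OrthonormalBasis ι ℝ V) {f : 𝓢(V, ℂ)} {K : Set V} (hK : volume K ≠ ⊤)
    (hfK : tsupport f ⊆ K) {k : ℕ} (hk : k ≠ 0) {B : ℝ}
    (hB : ∀ i, ∀ x ∈ K, ‖iteratedFDeriv ℝ k f x fun _ ↦ b i‖ ≤ B) :
    ∫ ξ, ‖ξ‖ ^ (2 * k) * ‖𝓕 f ξ‖ ^ 2 ≤ (Fintype.card ι : ℝ) ^ k * (volume.real K * B ^ 2) := by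
  calc ∫ ξ, ‖ξ‖ ^ (2 * k) * ‖𝓕 f ξ‖ ^ 2
      ≤ (Fintype.card ι : ℝ) ^ (k - 1) * ∑ i, ∫ x, ‖(∂^{fun _ : Fin k ↦ b i} f) x‖ ^ 2 :=
        integral_norm_pow_mul_norm_fourier_sq_le b f hk
    _ ≤ (Fintype.card ι : ℝ) ^ (k - 1) * ∑ _i : ι, volume.real K * B ^ 2 := by
        gcongr with i
        refine integral_norm_sq_le_of_support_subset hK ?_ fun x hx ↦ ?_
        · exact (subset_tsupport _).trans
            ((SchwartzMap.tsupport_iteratedLineDerivOp_subset _ f).trans hfK)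
        · rw [SchwartzMap.iteratedLineDerivOp_eq_iteratedFDeriv]
          exact hB i x hx
    _ = (Fintype.card ι : ℝ) ^ k * (volume.real K * B ^ 2) := by
        rw [sum_const, card_univ, nsmul_eq_mul, ← mul_assoc, pow_sub_one_mul hk]

variable {n : ℕ} {M : ℕ → ℝ} {U₀ U V : Set (Esp n)} {Q : ℝ} {χ : ℕ → Esp n → ℝ} {v : Esp n → ℝ}

lemma EHCutoff.exists_schwartzMap_eq_mul (hχ : EHCutoff χ U V Q) (hU₀ : IsOpen U₀)
    (hUU₀ : U ⊆ U₀) (hv : ContDiffOn ℝ ∞ v U₀) {k : ℕ} (hk : 1 ≤ k) :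
    ∃ F : 𝓢(Esp n, ℂ), ⇑F = fun x ↦ ((χ k x * v x : ℝ) : ℂ) := by
  obtain ⟨hsmooth, hcompact, hsupp, -⟩ := hχ k hk
  exact _root_.exists_schwartzMap_eq_mul hU₀ hsmooth hcompact (hsupp.trans hUU₀) hv

lemma EHCutoff.exists_abs_iteratedFDeriv_mul_le (hM : IsWeightSeq M) (hfac : FactBound M)
    (hχ : EHCutoff χ U V Q) (hQ : 0 ≤ Q) (hU₀ : IsOpen U₀) (hv : v ∈ DCclass M U₀)
    {K : Set (Esp n)} (hK : IsCompact K) (hKU₀ : K ⊆ U₀) :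
    ∃ C ≥ 0, ∃ γ ≥ 0, ∀ k, 1 ≤ k → ∀ i, ∀ x ∈ K,
      |iteratedFDeriv ℝ k (fun y ↦ χ k y * v y) x fun _ ↦ EuclideanSpace.single i 1| ≤
        C * γ ^ k * M k := by
  obtain ⟨A, hA, h, hh, hfac⟩ := hfac
  obtain ⟨hvs, hvb⟩ := hv
  obtain ⟨B, hB, q, hq, hvb⟩ := hvb K hKU₀ hK
  refine ⟨A * B, by positivity, Real.exp 1 * (Q * h + q), by positivity, fun k hk i x hx ↦ ?_⟩
  obtain ⟨hχs, -, -, -, hχb⟩ := hχ k hk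
  refine abs_iteratedFDeriv_mul_le hM hA.le hh.le hfac hU₀ hχs.contDiffOn hvs (hKU₀ hx) _ hQ hB.le
    hq.le (fun j hj ↦ ?_) fun j _ ↦ ?_
  · simpa only [mderiv_single isOpen_univ hχs.contDiffOn i j (Set.mem_univ x), degree_single]
      using hχb (Pi.single i j) (by rwa [degree_single]) x
  · simpa only [mderiv_single hU₀ hvs i j (hKU₀ hx), degree_single] using hvb (Pi.single i j) x hx

lemma EHCutoff.exists_integral_fourier_mul_le (hM : IsWeightSeq M) (hfac : FactBound M)
    (hχ : EHCutoff χ U V Q) (hQ : 0 ≤ Q) (hU₀ : IsOpen U₀) (hUU₀ : closure U ⊆ U₀)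
    (hU : IsCompact (closure U)) (hv : v ∈ DCclass M U₀) :
    ∃ C ≥ 0, ∃ γ ≥ 0, ∀ k, 1 ≤ k →
      Integrable (fun ξ ↦ ‖ξ‖ ^ (2 * k) * ‖𝓕 (fun x ↦ ((χ k x * v x : ℝ) : ℂ)) ξ‖ ^ 2) ∧
      ∫ ξ, ‖ξ‖ ^ (2 * k) * ‖𝓕 (fun x ↦ ((χ k x * v x : ℝ) : ℂ)) ξ‖ ^ 2 ≤
        (C * γ ^ k * M k) ^ 2 := by
  obtain ⟨C, hC, γ, hγ, hbound⟩ := hχ.exists_abs_iteratedFDeriv_mul_le hM hfac hQ hU₀ hv hU hUU₀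
  refine ⟨√(volume.real (closure U)) * C, by positivity, √n * γ, by positivity, fun k hk ↦ ?_⟩
  obtain ⟨hχs, -, hχU, -⟩ := hχ k hk
  have hχU' : tsupport (χ k) ⊆ closure U := hχU.trans subset_closure
  obtain ⟨F, hF⟩ := hχ.exists_schwartzMap_eq_mul hU₀ (subset_closure.trans hUU₀) hv.1 hk
  rw [← hF, ← SchwartzMap.fourier_coe]
  refine ⟨integrable_norm_pow_mul_norm_schwartzMap_sq _ _, ?_⟩
  have hsupp : tsupport F ⊆ closure U := by
    rw [hF]
    refine (closure_mono fun x hx ↦ ?_).trans hχU'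
    exact left_ne_zero_of_mul (Complex.ofReal_ne_zero.1 hx)
  calc ∫ ξ, ‖ξ‖ ^ (2 * k) * ‖𝓕 F ξ‖ ^ 2
      ≤ (Fintype.card (Fin n) : ℝ) ^ k * (volume.real (closure U) * (C * γ ^ k * M k) ^ 2) := by
        refine integral_norm_pow_mul_norm_fourier_sq_le_card_pow (EuclideanSpace.basisFun (Fin n) ℝ)
          hU.measure_ne_top hsupp (by lia) fun i x hx ↦ ?_
        rw [hF, norm_iteratedFDeriv_ofReal_apply
          (contDiff_mul_of_tsupport_subset hU₀ hχs (hχU'.trans hUU₀) hv.1)]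
        simpa only [EuclideanSpace.basisFun_apply] using hbound k hk i x hx
    _ = (√n ^ k) ^ 2 * (√(volume.real (closure U)) ^ 2 * (C * γ ^ k * M k) ^ 2) := by
        rw [← pow_mul, mul_comm k 2, pow_mul, Real.sq_sqrt n.cast_nonneg,
          Real.sq_sqrt measureReal_nonneg, Fintype.card_fin]
    _ = (√(volume.real (closure U)) * C * (√n * γ) ^ k * M k) ^ 2 := by
        ring

end SingleFunction

section Baire

open scoped ENNReal

lemma le_ofReal_mul_of_forall_mem_ball_le {E : Type*} [NormedAddCommGroup E] [NormedSpace ℝ E]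
    {p : E → ℝ≥0∞} (hsub : ∀ u v, p (u - v) ≤ p u + p v)
    (hsmul : ∀ (a : ℝ) u, p (a • u) ≤ ‖a‖ₑ * p u) {u₀ : E} {r : ℝ} (hr : 0 < r) {B : ℝ≥0∞}
    (hB : ∀ u ∈ Metric.ball u₀ r, p u ≤ B) (u : E) :
    p u ≤ ENNReal.ofReal (4 / r * ‖u‖) * B := by
  rcases eq_or_ne u 0 with rfl | hu
  · simpa using hsmul 0 0
  · set a : ℝ := 2 * ‖u‖ / r with ha
    have ha₀ : 0 < a := by positivity
    have hmem : u₀ + a⁻¹ • u ∈ Metric.ball u₀ r := by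
      rw [mem_ball_iff_norm, add_sub_cancel_left, norm_smul, norm_inv, Real.norm_of_nonneg ha₀.le,
        ha]
      field_simp
      norm_num
    calc p u = p (a • ((u₀ + a⁻¹ • u) - u₀)) := by
          rw [add_sub_cancel_left, smul_inv_smul₀ ha₀.ne']
      _ ≤ ‖a‖ₑ * (B + B) := by
          refine (hsmul _ _).trans (mul_le_mul_right ((hsub _ _).trans ?_) _)
          exact add_le_add (hB _ hmem) (hB _ (Metric.mem_ball_self hr))
      _ = ENNReal.ofReal (4 / r * ‖u‖) * B := by
          rw [← two_mul, ← mul_assoc, Real.enorm_of_nonneg ha₀.le, ← ENNReal.ofReal_ofNat 2,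
            ← ENNReal.ofReal_mul ha₀.le, ha]
          congr 2
          ring

lemma exists_forall_le_mul_of_lowerSemicontinuous {E J : Type*} [NormedAddCommGroup E]
    [NormedSpace ℝ E] [BaireSpace E] {p : J → E → ℝ≥0∞} (hlsc : ∀ j, LowerSemicontinuous (p j))
    (hsub : ∀ j u v, p j (u - v) ≤ p j u + p j v)
    (hsmul : ∀ j (a : ℝ) u, p j (a • u) ≤ ‖a‖ₑ * p j u) {w : ℕ → J → ℝ≥0∞}
    (hw : ∀ u, ∃ N, ∀ j, p j u ≤ w N j) :
    ∃ C > 0, ∃ N, ∀ j u, p j u ≤ ENNReal.ofReal (C * ‖u‖) * w N j := by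
  have hclosed (N : ℕ) : IsClosed {u | ∀ j, p j u ≤ w N j} := by
    simp only [Set.ofPred_forall]
    exact isClosed_iInter fun j ↦ (hlsc j).isClosed_preimage (w N j)
  obtain ⟨N, u₀, hu₀⟩ := nonempty_interior_of_iUnion_of_closed hclosed
    (Set.eq_univ_of_forall fun u ↦ Set.mem_iUnion.2 (hw u))
  obtain ⟨r, hr, hball⟩ := Metric.isOpen_iff.1 isOpen_interior u₀ hu₀
  exact ⟨4 / r, by positivity, N, fun j u ↦ le_ofReal_mul_of_forall_mem_ball_le (hsub j) (hsmul j)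
    hr (fun v hv ↦ interior_subset (hball hv) j) u⟩

variable {X F : Type*} [MeasurableSpace X] {μ : Measure X} [NormedAddCommGroup F]

lemma lowerSemicontinuous_eLpNorm {Y : Type*} [TopologicalSpace Y] [FirstCountableTopology Y]
    {f : Y → X → F} (hmeas : ∀ y, AEStronglyMeasurable (f y) μ)
    (hcont : ∀ x, Continuous fun y ↦ f y x) (q : ℝ≥0∞) :
    LowerSemicontinuous fun y ↦ eLpNorm (f y) q μ := by
  refine lowerSemicontinuous_iff_isClosed_preimage.2 fun c ↦
    isClosed_iff_frequently.2 fun y hy ↦ ?_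
  obtain ⟨z, hz, hzc⟩ := frequently_iff_seq_forall.1 hy
  exact Lp.eLpNorm_le_of_ae_tendsto (Eventually.of_forall hzc) (fun i ↦ hmeas (z i))
    (ae_of_all _ fun x ↦ ((hcont x).tendsto y).comp hz)

lemma exists_forall_eLpNorm_le_mul {E J : Type*} [NormedAddCommGroup E] [NormedSpace ℝ E]
    [BaireSpace E] [NormedSpace ℝ F] {q : ℝ≥0∞} (hq : 1 ≤ q) {T : J → X → E →L[ℝ] F}
    (hT : ∀ j u, AEStronglyMeasurable (fun x ↦ T j x u) μ) {w : ℕ → J → ℝ≥0∞}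
    (hw : ∀ u, ∃ N, ∀ j, eLpNorm (fun x ↦ T j x u) q μ ≤ w N j) :
    ∃ C > 0, ∃ N, ∀ j u,
      eLpNorm (fun x ↦ T j x u) q μ ≤ ENNReal.ofReal (C * ‖u‖) * w N j := by
  refine exists_forall_le_mul_of_lowerSemicontinuous
    (fun j ↦ lowerSemicontinuous_eLpNorm (hT j) (fun x ↦ (T j x).continuous) q)
    (fun j u v ↦ ?_) (fun j a u ↦ ?_) hw
  · simp only [map_sub]
    exact eLpNorm_sub_le (hT j u) (hT j v) hq
  · simp only [map_smul]
    exact eLpNorm_const_smul_le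

lemma eLpNorm_two_le_ofReal_iff {f : X → F} (hf : AEStronglyMeasurable f μ) {B : ℝ}
    (hB : 0 ≤ B) :
    eLpNorm f 2 μ ≤ ENNReal.ofReal B ↔
      Integrable (fun x ↦ ‖f x‖ ^ 2) μ ∧ ∫ x, ‖f x‖ ^ 2 ∂μ ≤ B ^ 2 := by
  have hnorm (h : MemLp f 2 μ) :
      eLpNorm f 2 μ ≤ ENNReal.ofReal B ↔ ∫ x, ‖f x‖ ^ 2 ∂μ ≤ B ^ 2 := by
    rw [h.eLpNorm_eq_integral_rpow_norm two_ne_zero ENNReal.ofNat_ne_top,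
      ENNReal.ofReal_le_ofReal_iff hB]
    simp only [ENNReal.toReal_ofNat, Real.rpow_ofNat]
    rw [← one_div, ← Real.sqrt_eq_rpow, Real.sqrt_le_left hB]
  rw [← memLp_two_iff_integrable_sq_norm hf]
  refine ⟨fun h ↦ ?_, fun h ↦ (hnorm h.1).2 h.2⟩
  have hmem : MemLp f 2 μ := ⟨hf, h.trans_lt ENNReal.ofReal_lt_top⟩
  exact ⟨hmem, (hnorm hmem).1 h⟩

end Baire

section CutoffFourier

open scoped FourierTransform RealInnerProductSpace

variable {V : Type*} [NormedAddCommGroup V] [InnerProductSpace ℝ V] [MeasurableSpace V]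
  [BorelSpace V] {c : V → ℝ}

lemma memLp_fourierChar_smul {ν : Measure V} {p : ENNReal} (hc : MemLp c p ν) (ξ : V) :
    MemLp (fun x ↦ 𝐞 (-⟪x, ξ⟫) • (c x : ℂ)) p ν := by
  refine hc.of_le ?_ (ae_of_all _ fun x ↦ by simp)
  have hchar : Continuous fun x : V ↦ (𝐞 (-⟪x, ξ⟫) : ℂ) :=
    continuous_subtype_val.comp (Real.continuous_fourierChar.comp (by fun_prop))
  exact hchar.aestronglyMeasurable.mul (Complex.continuous_ofReal.comp_aestronglyMeasurable hc.1)

/-- The functional `w ↦ 𝓕 (c w) (ξ)` on `L²(ν)`, for a cut-off function `c ∈ L²(ν)`, encoded as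
the pairing of `w` with the `L²` function `x ↦ e^{-2πi⟨x, ξ⟩} c(x)`. -/
def cutoffFourierCLM {ν : Measure V} (hc : MemLp c 2 ν) (ξ : V) : Lp ℝ 2 ν →L[ℝ] ℂ :=
  (ContinuousLinearMap.lsmul ℝ ℝ).flip.lpPairing ν 2 2 (memLp_fourierChar_smul hc ξ).toLp

lemma cutoffFourierCLM_apply_eq_fourier [FiniteDimensional ℝ V] {Ω S : Set V} (hSΩ : S ⊆ Ω)
    (hc : MemLp c 2 (volume.restrict Ω)) (hcS : Function.support c ⊆ S)
    {w : Lp ℝ 2 (volume.restrict Ω)} {v : V → ℝ} (hwv : ∀ᵐ x, x ∈ S → w x = v x) (ξ : V) :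
    cutoffFourierCLM hc ξ w = 𝓕 (fun x ↦ ((c x * v x : ℝ) : ℂ)) ξ := by
  have hzero (x : V) (hx : x ∉ S) : c x = 0 := Function.notMem_support.1 fun h ↦ hx (hcS h)
  have hpair : cutoffFourierCLM hc ξ w =
      ∫ x in Ω, 𝐞 (-⟪x, ξ⟫) • ((c x * v x : ℝ) : ℂ) := by
    rw [cutoffFourierCLM, ContinuousLinearMap.lpPairing_eq_integral]
    refine integral_congr_ae ?_
    filter_upwards [(memLp_fourierChar_smul hc ξ).coeFn_toLp, ae_restrict_of_ae hwv] with x hx hwx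
    rw [hx]
    by_cases hxS : x ∈ S
    · simp [hwx hxS, Circle.smul_def]
      ring
    · simp [hzero x hxS]
  rw [hpair, Real.fourier_eq]
  refine setIntegral_eq_integral_of_forall_compl_eq_zero fun x hx ↦ ?_
  simp [hzero x fun h ↦ hx (hSΩ h)]

end CutoffFourier

section UniformEstimate

open scoped ContDiff FourierTransform SchwartzMap

lemma eLpNorm_norm_pow_smul_le_iff {V F : Type*} [NormedAddCommGroup V] [MeasurableSpace V]
    [OpensMeasurableSpace V] [NormedAddCommGroup F] [NormedSpace ℝ F] {μ : Measure V} {g : V → F}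
    (hg : AEStronglyMeasurable g μ) (k : ℕ) {B : ℝ} (hB : 0 ≤ B) :
    eLpNorm (fun ξ ↦ ‖ξ‖ ^ k • g ξ) 2 μ ≤ ENNReal.ofReal B ↔
      Integrable (fun ξ ↦ ‖ξ‖ ^ (2 * k) * ‖g ξ‖ ^ 2) μ ∧
        ∫ ξ, ‖ξ‖ ^ (2 * k) * ‖g ξ‖ ^ 2 ∂μ ≤ B ^ 2 := by
  have hsq (ξ : V) : ‖ξ‖ ^ (2 * k) * ‖g ξ‖ ^ 2 = ‖‖ξ‖ ^ k • g ξ‖ ^ 2 := by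
    rw [norm_smul, norm_pow, norm_norm, mul_pow, ← pow_mul, mul_comm 2 k]
  simp only [hsq]
  have hpow : Measurable fun ξ : V ↦ ‖ξ‖ ^ k := measurable_norm.pow_const k
  exact eLpNorm_two_le_ofReal_iff (hpow.aestronglyMeasurable.smul hg) hB

lemma exists_nat_forall_mul_pow_le (a : ℝ) {b : ℝ} (hb : 0 ≤ b) :
    ∃ N : ℕ, ∀ k : ℕ, a * b ^ k ≤ ((N : ℝ) + 1) ^ (k + 1) := by
  obtain ⟨N, hN⟩ := exists_nat_ge (max a b)
  refine ⟨N, fun k ↦ ?_⟩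
  rw [pow_succ']
  gcongr <;> linarith [le_max_left a b, le_max_right a b]

variable {n : ℕ} {M : ℕ → ℝ} {U₀ U V : Set (Esp n)} {Q : ℝ} {χ : ℕ → Esp n → ℝ} {v : Esp n → ℝ}

lemma EHCutoff.continuous_fourier_mul (hχ : EHCutoff χ U V Q) (hU₀ : IsOpen U₀) (hUU₀ : U ⊆ U₀)
    (hv : ContDiffOn ℝ ∞ v U₀) {k : ℕ} (hk : 1 ≤ k) :
    Continuous (𝓕 fun x ↦ ((χ k x * v x : ℝ) : ℂ)) := by
  obtain ⟨F, hF⟩ := hχ.exists_schwartzMap_eq_mul hU₀ hUU₀ hv hk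
  rw [← hF, ← SchwartzMap.fourier_coe]
  exact (𝓕 F).continuous

lemma EHCutoff.exists_eLpNorm_fourier_mul_le (hM : IsWeightSeq M) (hfac : FactBound M)
    (hχ : EHCutoff χ U V Q) (hQ : 0 ≤ Q) (hU₀ : IsOpen U₀) (hUU₀ : closure U ⊆ U₀)
    (hU : IsCompact (closure U)) (hv : v ∈ DCclass M U₀) :
    ∃ N : ℕ, ∀ k, 1 ≤ k →
      eLpNorm (fun ξ ↦ ‖ξ‖ ^ k • 𝓕 (fun x ↦ ((χ k x * v x : ℝ) : ℂ)) ξ) 2 volume ≤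
        ENNReal.ofReal (((N : ℝ) + 1) ^ (k + 1) * M k) := by
  obtain ⟨C, hC, γ, hγ, hbound⟩ :=
    hχ.exists_integral_fourier_mul_le hM hfac hQ hU₀ hUU₀ hU hv
  obtain ⟨N, hN⟩ := exists_nat_forall_mul_pow_le C hγ
  refine ⟨N, fun k hk ↦ ?_⟩
  have hMk : 0 ≤ M k := (hM.1 k).le
  have hcont := hχ.continuous_fourier_mul hU₀ (subset_closure.trans hUU₀) hv.1 hk
  refine ((eLpNorm_norm_pow_smul_le_iff hcont.aestronglyMeasurable k (by positivity)).2
    (hbound k hk)).trans (ENNReal.ofReal_le_ofReal ?_)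
  gcongr
  exact hN k

theorem statement12_general (hM : IsWeightSeq M) (hfac : FactBound M) {Ω : Set (Esp n)}
    {E : Type*} [NormedAddCommGroup E] [NormedSpace ℝ E] [BaireSpace E]
    (ι : E →L[ℝ] Lp ℝ 2 (volume.restrict Ω)) (hU₀ : IsOpen U₀) (hU₀Ω : U₀ ⊆ Ω)
    (hreg : ∀ u : E, ∃ v ∈ DCclass M U₀, ∀ᵐ x, x ∈ U₀ → ι u x = v x)
    (hUU₀ : closure U ⊆ U₀) (hU : IsCompact (closure U)) (hQ : 0 ≤ Q) (hχ : EHCutoff χ U V Q) :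
    ∃ C > 0, ∃ γ > 0, ∀ k, 1 ≤ k → ∀ u : E, ∀ v ∈ DCclass M U₀,
      (∀ᵐ x, x ∈ U₀ → ι u x = v x) →
      Integrable (fun ξ ↦ ‖ξ‖ ^ (2 * k) * ‖𝓕 (fun x ↦ ((χ k x * v x : ℝ) : ℂ)) ξ‖ ^ 2) ∧
      ∫ ξ, ‖ξ‖ ^ (2 * k) * ‖𝓕 (fun x ↦ ((χ k x * v x : ℝ) : ℂ)) ξ‖ ^ 2 ≤
        (C * γ ^ k * M k * ‖u‖) ^ 2 := by
  have hUsub : U ⊆ U₀ := subset_closure.trans hUU₀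
  have hχL2 (k : Set.Ici 1) : MemLp (χ k) 2 (volume.restrict Ω) :=
    (hχ k k.2).1.continuous.memLp_of_hasCompactSupport (hχ k k.2).2.1
  let T (k : Set.Ici 1) (ξ : Esp n) : E →L[ℝ] ℂ :=
    ‖ξ‖ ^ (k : ℕ) • cutoffFourierCLM (hχL2 k) ξ ∘L ι
  have hT (k : Set.Ici 1) {u : E} {v : Esp n → ℝ} (huv : ∀ᵐ x, x ∈ U₀ → ι u x = v x) :
      (T k · u) = fun ξ ↦ ‖ξ‖ ^ (k : ℕ) • 𝓕 (fun x ↦ ((χ k x * v x : ℝ) : ℂ)) ξ := by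
    have hsupp : Function.support (χ k) ⊆ U₀ :=
      (subset_tsupport _).trans ((hχ k k.2).2.2.1.trans hUsub)
    exact funext fun ξ ↦ congrArg (‖ξ‖ ^ (k : ℕ) • ·)
      (cutoffFourierCLM_apply_eq_fourier hU₀Ω (hχL2 k) hsupp huv ξ)
  have hmeas (k : Set.Ici 1) (u : E) : AEStronglyMeasurable (T k · u) := by
    obtain ⟨v, hv, huv⟩ := hreg u
    rw [hT k huv]
    have hcont := hχ.continuous_fourier_mul hU₀ hUsub hv.1 k.2
    exact Continuous.aestronglyMeasurable (by fun_prop)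
  obtain ⟨C, hC, N, hbound⟩ := exists_forall_eLpNorm_le_mul one_le_two hmeas
    (w := fun N k ↦ ENNReal.ofReal (((N : ℝ) + 1) ^ ((k : ℕ) + 1) * M k)) fun u ↦ by
      obtain ⟨v, hv, huv⟩ := hreg u
      obtain ⟨N, hN⟩ := hχ.exists_eLpNorm_fourier_mul_le hM hfac hQ hU₀ hUU₀ hU hv
      exact ⟨N, fun k ↦ hT k huv ▸ hN k k.2⟩
  refine ⟨C * (N + 1), by positivity, N + 1, by positivity, fun k hk u v hv huv ↦ ?_⟩
  have hMk : 0 ≤ M k := (hM.1 k).le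
  have hcont := hχ.continuous_fourier_mul hU₀ hUsub hv.1 hk
  refine (eLpNorm_norm_pow_smul_le_iff hcont.aestronglyMeasurable k (by positivity)).1 ?_
  calc eLpNorm (fun ξ ↦ ‖ξ‖ ^ k • 𝓕 (fun x ↦ ((χ k x * v x : ℝ) : ℂ)) ξ) 2 volume
      = eLpNorm (T ⟨k, hk⟩ · u) 2 volume := by rw [hT ⟨k, hk⟩ huv]
    _ ≤ ENNReal.ofReal (C * ‖u‖) * ENNReal.ofReal (((N : ℝ) + 1) ^ (k + 1) * M k) :=
        hbound ⟨k, hk⟩ u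
    _ = ENNReal.ofReal (C * (N + 1) * (N + 1) ^ k * M k * ‖u‖) := by
        rw [← ENNReal.ofReal_mul (by positivity)]
        ring_nf

end UniformEstimate

/-- Proposition 1 of the paper: let `M` be an admissible weight sequence,
`Ω` a bounded open set, `E` a Banach space injected continuously into `L²(Ω)`, and suppose
every `u ∈ E` agrees a.e. on an open set `U₀ ⊆ Ω` with a function `ũ` of class `E^{M}(U₀)`.
Then for `V ⋐ U ⋐ U₀` and any Ehrenpreis–Hörmander cut-off sequence `(χ_k)` supported in `U`
and centered in `V` there are `C, γ > 0` such that `|ξ|^k 𝓕(χ_k ũ) ∈ L²(ℝ^n)` with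
`‖ |ξ|^k 𝓕(χ_k ũ) ‖_{L²} ≤ C γ^k M_k ‖u‖_E` for all `k ≥ 1` and `u ∈ E`. -/
theorem statement12 {n : ℕ} (M : ℕ → ℝ) (hM : IsAdmissible M)
    (Ω : Set (Esp n)) (hΩo : IsOpen Ω) (hΩb : Bornology.IsBounded Ω)
    (E : Type) [NormedAddCommGroup E] [NormedSpace ℝ E] [CompleteSpace E]
    (ι : E →L[ℝ] Lp ℝ 2 (volume.restrict Ω)) (hι : Function.Injective ι)
    (U₀ : Set (Esp n)) (hU₀o : IsOpen U₀) (hU₀Ω : U₀ ⊆ Ω)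
    (hreg : ∀ u : E, ∃ v : Esp n → ℝ, v ∈ DCclass M U₀ ∧
      ∀ᵐ x ∂volume, x ∈ U₀ → (ι u : Esp n → ℝ) x = v x)
    (V U : Set (Esp n)) (hVo : IsOpen V) (hUo : IsOpen U)
    (hVU : closure V ⊆ U) (hVc : IsCompact (closure V))
    (hUU₀ : closure U ⊆ U₀) (hUc : IsCompact (closure U))
    (Q : ℝ) (hQ : 0 < Q) (χ : ℕ → Esp n → ℝ) (hχ : EHCutoff χ U V Q) :
    ∃ C > 0, ∃ γ > 0, ∀ k : ℕ, 1 ≤ k → ∀ u : E, ∀ v : Esp n → ℝ,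
      v ∈ DCclass M U₀ → (∀ᵐ x ∂volume, x ∈ U₀ → (ι u : Esp n → ℝ) x = v x) →
      Integrable (fun ξ : Esp n =>
        ‖ξ‖ ^ (2 * k) * ‖FourierTransform.fourier (fun x : Esp n => ((χ k x * v x : ℝ) : ℂ)) ξ‖ ^ 2)
        volume ∧
      (∫ ξ : Esp n,
          ‖ξ‖ ^ (2 * k) * ‖FourierTransform.fourier (fun x : Esp n => ((χ k x * v x : ℝ) : ℂ)) ξ‖ ^ 2) ≤
        (C * γ ^ k * M k * ‖u‖) ^ 2 := by
  exact statement12_general hM.1 hM.2.1 ι hU₀o hU₀Ω hreg hUU₀ hUc hQ.le hχ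

end
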